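/- Let L be a finite-dimensional left Leibniz algebra over a field F of characteristic zero that is AKS-complete. A symmetric bilinear map f : L × L → L (i.e. f(x,y) = f(y,x) for all x,y) is a biderivation of L if and only if there exists a skew-commuting linear map g : L → L such that f(x,y) = [g(x),y] for all x, y ∈ L. -/

import Mathlib

/-!
If every derivation is a left multiplication `L_a`, each `f(x,-)` is some `L_a`. Since `a ↦ L_a`
need not be injective, `a` is not determined by `x`; a choice of `a` that is linear in `x` is a lift
of `x ↦ f(x,-)` along `a ↦ L_a`, and it exists because vector spaces are projective. The symmetry
of `f` is the skew-commutation of the lift.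
-/

theorem range_le_range_iff_exists_comp_eq {R P M N : Type*} [Semiring R]
    [AddCommMonoid P] [Module R P] [Module.Projective R P]
    [AddCommMonoid M] [Module R M] [AddCommMonoid N] [Module R N]
    {f : P →ₗ[R] N} {b : M →ₗ[R] N} :
    LinearMap.range f ≤ LinearMap.range b ↔ ∃ g : P →ₗ[R] M, b ∘ₗ g = f := by
  constructor
  · intro hf
    obtain ⟨g, hg⟩ := Module.projective_lifting_property b.rangeRestrict
      (f.codRestrict (LinearMap.range b) fun x => hf (LinearMap.mem_range_self f x))
      b.surjective_rangeRestrict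
    exact ⟨g, LinearMap.ext fun x => congrArg Subtype.val (LinearMap.congr_fun hg x)⟩
  · rintro ⟨g, rfl⟩
    exact LinearMap.range_comp_le_range g b

section Bracket

variable {R L : Type*} [CommSemiring R] [AddCommMonoid L] [Module R L]

/-- `b` is the bracket `[x, y] = b x y` of a left Leibniz algebra. -/
def IsLeftLeibniz (b : L →ₗ[R] L →ₗ[R] L) : Prop :=
  ∀ x y z : L, b x (b y z) = b y (b x z) + b (b x y) z

/-- `D` is a derivation of the algebra with bracket `b`. Mathlib's `Derivation` and `LieDerivation`
do not apply, as `b` is neither commutative and associative nor a Lie bracket. -/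
def IsDerivation (b : L →ₗ[R] L →ₗ[R] L) (D : L →ₗ[R] L) : Prop :=
  ∀ x y : L, D (b x y) = b (D x) y + b x (D y)

/-- `f` is a biderivation of the algebra with bracket `b`: a derivation in each variable. The second
condition is written out with the differentiated variables first. -/
def IsBiderivation (b f : L →ₗ[R] L →ₗ[R] L) : Prop :=
  (∀ x : L, IsDerivation b (f x)) ∧
    ∀ x y z : L, f (b x y) z = b (f x z) y + b x (f y z)

/-- `g` is skew-commuting for the bracket `b`; equivalently, `(x, y) ↦ b (g x) y` is symmetric. -/
def IsSkewCommuting (b : L →ₗ[R] L →ₗ[R] L) (g : L →ₗ[R] L) : Prop :=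
  ∀ x y : L, b (g x) y = b (g y) x

variable {b f : L →ₗ[R] L →ₗ[R] L}

theorem IsLeftLeibniz.isDerivation (hb : IsLeftLeibniz b) (a : L) : IsDerivation b (b a) :=
  fun x y => (hb a x y).trans (add_comm _ _)

theorem isBiderivation_iff_forall_isDerivation (hf : ∀ x y : L, f x y = f y x) :
    IsBiderivation b f ↔ ∀ x : L, IsDerivation b (f x) := by
  refine ⟨And.left, fun h => ⟨h, fun x y z => ?_⟩⟩
  rw [hf (b x y) z, hf x z, hf y z]
  exact h z x y

theorem forall_isDerivation_iff_exists_comp_eq [Module.Projective R L] (hb : IsLeftLeibniz b)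
    (hinner : ∀ D : L →ₗ[R] L, IsDerivation b D → ∃ a : L, ∀ y : L, D y = b a y) :
    (∀ x : L, IsDerivation b (f x)) ↔ ∃ g : L →ₗ[R] L, b ∘ₗ g = f := by
  rw [← range_le_range_iff_exists_comp_eq]
  constructor
  · rintro hf _ ⟨x, rfl⟩
    obtain ⟨a, ha⟩ := hinner (f x) (hf x)
    exact ⟨a, LinearMap.ext fun y => (ha y).symm⟩
  · intro hrange x
    obtain ⟨a, ha⟩ := hrange (LinearMap.mem_range_self f x)
    exact ha ▸ hb.isDerivation a

theorem stmt_16_general [Module.Projective R L] (hb : IsLeftLeibniz b)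
    (hinner : ∀ D : L →ₗ[R] L, IsDerivation b D → ∃ a : L, ∀ y : L, D y = b a y)
    (hf : ∀ x y : L, f x y = f y x) :
    IsBiderivation b f ↔
      ∃ g : L →ₗ[R] L, IsSkewCommuting b g ∧ ∀ x y : L, f x y = b (g x) y := by
  rw [isBiderivation_iff_forall_isDerivation hf, forall_isDerivation_iff_exists_comp_eq hb hinner]
  constructor
  · rintro ⟨g, rfl⟩
    exact ⟨g, hf, fun _ _ => rfl⟩
  · rintro ⟨g, -, hg⟩
    exact ⟨g, LinearMap.ext₂ fun x y => (hg x y).symm⟩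

end Bracket

/-- Let `L` be a finite-dimensional left Leibniz algebra over a field of
characteristic zero which is AKS-complete. A symmetric bilinear map `f : L × L → L` is a
biderivation iff there exists a skew-commuting linear map `g : L → L` with
`f(x,y) = [g(x),y]` for all `x, y ∈ L`. -/
theorem stmt_16 (F : Type*) [Field F] [CharZero F] (L : Type*) [AddCommGroup L] [Module F L]
    [FiniteDimensional F L]
    (b : L →ₗ[F] L →ₗ[F] L)
    (hleib : ∀ x y z : L, b x (b y z) = b y (b x z) + b (b x y) z)
    -- trivial center
    (hZ : ∀ x : L, (∀ y : L, b x y = 0 ∧ b y x = 0) → x = 0)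
    -- every derivation is a left multiplication
    (hComplete : ∀ D : L →ₗ[F] L, (∀ x y : L, D (b x y) = b (D x) y + b x (D y)) →
      ∃ a : L, ∀ y : L, D y = b a y)
    (f : L →ₗ[F] L →ₗ[F] L)
    (hsymm : ∀ x y : L, f x y = f y x) :
    -- `f` is a biderivation: `f(x,-)` and `f(-,x)` are derivations for every `x`
    ((∀ x y z : L, f x (b y z) = b (f x y) z + b y (f x z)) ∧
     (∀ x y z : L, f (b x y) z = b (f x z) y + b x (f y z)))
    ↔
    ∃ g : L →ₗ[F] L, (∀ x y : L, b (g x) y = b (g y) x) ∧ ∀ x y : L, f x y = b (g x) y :=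
  stmt_16_general hleib hComplete hsymm
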